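/- Let f : C([n],k) → R, let 0 ≤ t ≤ n, and let S ⊆ [n − t]. Then the sum over all z ∈ {0,1}^t of f̂_z(S)² equals the sum over all subsets T of [n] ∖ [n − t] of f̂(S ∪ T)². -/

import Mathlib

/-!
Write `E_{n,S}(x) = ∑_{y ≤ x} χ_{n,S}(y)` for `x` in the cube `{0,1}^n`. The entries of the iterated
up operator are `(k - |S|)!` times the containment indicator, so `P↑_{n,|S|,k} χ_{n,S}` is a positive
multiple of `E_{n,S}` on the slice of weight `k` (`basisVec_eq`), and Fourier coefficients may be
computed with `E`. With `i = |S|` and `n+1 ∉ S`, the recursion for `χ` turns into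

* `E_{n+1,S}(x ∘ b) = E_{n,S}(x)` (`profile_snoc_of_notMem`),
* `E_{n+1,S ∪ {n+1}}(x ∘ b) = E_{n,S}(x) (b - (|x| - i) / (n - 2i))` (`profile_snoc_of_mem`).

Hence on the slice `C([n+1],k)` the basis vectors of `S` and `S ∪ {n+1}` are `a + b` and
`(-u a + v b) / (n - 2i)`, where `a` and `b` are the basis vectors of `S` on the two subslices
`x_{n+1} = 0` and `x_{n+1} = 1`, `u = k - i` and `v = n - i - k + 1`. The norm identity
`u ‖a‖² = v ‖b‖²` (`normSq_rec`, by induction on `n`) shows that these two vectors are orthogonal.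
They therefore form an orthogonal basis of the plane spanned by `a` and `b`, and both sides of the
case `t = 1` are the squared norm of the projection of `f` to this plane (`coeffSq_step`); the
degenerate cases are those in which `a` or `b` is zero. The general case follows by induction on `t`
(`sum_coeffSq`).
-/

open scoped Classical

/-- The slice `C([n],k)`: vectors in `{0,1}^n` with exactly `k` ones. -/
abbrev Slice (n k : ℕ) :=
  {x : Fin n → Bool // (Finset.univ.filter fun i => x i = true).card = k}

/-- The up operator `P↑_{n,k}`. -/
noncomputable def upOp (n k : ℕ) : Matrix (Slice n (k + 1)) (Slice n k) ℝ :=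
  Matrix.of fun x y => if ∀ i, y.1 i = true → x.1 i = true then (1 : ℝ) else 0

/-- The down operator `P↓_{n,k}` (the transpose of `P↑_{n,k-1}`); it is the zero
matrix for `k = 0`. -/
noncomputable def downOp (n k : ℕ) : Matrix (Slice n (k - 1)) (Slice n k) ℝ :=
  Matrix.of fun x y => if 0 < k ∧ ∀ i, x.1 i = true → y.1 i = true then (1 : ℝ) else 0

noncomputable def upPathAux (n i : ℕ) : (d : ℕ) → Matrix (Slice n (i + d)) (Slice n i) ℝ
  | 0 => show Matrix (Slice n (i + 0)) (Slice n i) ℝ from (1 : Matrix (Slice n i) (Slice n i) ℝ)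
  | d + 1 => upOp n (i + d) * upPathAux n i d

/-- The iterated up operator `P↑_{n,i,k} = P↑_{n,k-1} ⋯ P↑_{n,i}`. -/
noncomputable def upPath (n i k : ℕ) : Matrix (Slice n k) (Slice n i) ℝ :=
  if h : i ≤ k then
    cast (by rw [Nat.add_sub_cancel' h]) (upPathAux n i (k - i))
  else 0

/-- `P∨_{n,k} = P↑_{n,k-1} P↓_{n,k}`. -/
noncomputable def upDown (n k : ℕ) : Matrix (Slice n k) (Slice n k) ℝ :=
  if h : 1 ≤ k then
    cast (by rw [Nat.sub_add_cancel h]) (upOp n (k - 1) * downOp n k)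
  else 0

/-- `P∧_{n,k} = P↓_{n,k+1} P↑_{n,k}`. -/
noncomputable def downUp (n k : ℕ) : Matrix (Slice n k) (Slice n k) ℝ :=
  downOp n (k + 1) * upOp n k

/-- `S ∈ H_{n,k}`: `S ⊆ {1,…,n}`, `|S| ≤ k`, and the `j`-th smallest element
(1-indexed) is at least `2j`. -/
def IsH (n k : ℕ) (S : Finset ℕ) : Prop :=
  S ⊆ Finset.Icc 1 n ∧ S.card ≤ k ∧
    ∀ j, j < S.card → 2 * (j + 1) ≤ (S.sort (· ≤ ·)).getD j 0

lemma wcast_false {n : ℕ} (x : Fin (n + 1) → Bool) (h : ¬ x (Fin.last n) = true) :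
    (Finset.univ.filter fun i : Fin n => x (Fin.castSucc i) = true).card
      = (Finset.univ.filter fun i : Fin (n + 1) => x i = true).card := by
  rw [Finset.card_filter, Finset.card_filter, Fin.sum_univ_castSucc]
  simp [h]

lemma wcast_true {n : ℕ} (x : Fin (n + 1) → Bool) (h : x (Fin.last n) = true) :
    (Finset.univ.filter fun i : Fin n => x (Fin.castSucc i) = true).card + 1
      = (Finset.univ.filter fun i : Fin (n + 1) => x i = true).card := by
  rw [Finset.card_filter, Finset.card_filter, Fin.sum_univ_castSucc]
  simp [h]

/-- Forgetting the last coordinate of `x` when it equals `0`. -/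
def dropLast {n m : ℕ} (x : Slice (n + 1) m) (h : ¬ x.1 (Fin.last n) = true) : Slice n m :=
  ⟨fun i => x.1 (Fin.castSucc i), by
    show (Finset.univ.filter fun i : Fin n => x.1 (Fin.castSucc i) = true).card = m
    rw [wcast_false x.1 h]; exact x.2⟩

/-- Forgetting the last coordinate of `x` when it equals `1`. -/
def dropLastT {n m : ℕ} (x : Slice (n + 1) m) (h : x.1 (Fin.last n) = true) : Slice n (m - 1) :=
  ⟨fun i => x.1 (Fin.castSucc i), by
    show (Finset.univ.filter fun i : Fin n => x.1 (Fin.castSucc i) = true).card = m - 1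
    have h1 := wcast_true x.1 h
    have h2 := x.2
    omega⟩

/-- The vector `χ_{n,S}` on the slice `C([n],|S|)`, defined recursively. -/
noncomputable def chi : (n : ℕ) → (S : Finset ℕ) → Slice n S.card → ℝ
  | 0, _ => fun _ => 1
  | n + 1, S =>
    if hS : n + 1 ∈ S then
      fun x =>
        if hx : x.1 (Fin.last n) = true then
          chi n (S.erase (n + 1)) ⟨(dropLastT x hx).1, by
            show (Finset.univ.filter fun i : Fin n => x.1 (Fin.castSucc i) = true).card
              = (S.erase (n + 1)).card
            rw [Finset.card_erase_of_mem hS]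
            exact (dropLastT x hx).2⟩
        else
          -(∑ y : Slice n (S.erase (n + 1)).card,
              (if ∀ i, y.1 i = true → (dropLast x hx).1 i = true then (1 : ℝ) else 0) *
                chi n (S.erase (n + 1)) y) / ((n : ℝ) + 1 - 2 * S.card + 1)
    else
      fun x =>
        if hx : x.1 (Fin.last n) = true then 0
        else chi n S (dropLast x hx)

/-- The basis vector `P↑_{n,|S|,k} χ_{n,S}` of `R^{C([n],k)}`. -/
noncomputable def basisVec (n k : ℕ) (S : Finset ℕ) : Slice n k → ℝ :=
  (upPath n S.card k).mulVec (chi n S)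

/-- The Fourier coefficient `f̂(S)`, equal to `0` when `S ∉ H_{n,min{k,n-k}}`. -/
noncomputable def fourierSlice (n k : ℕ) (f : Slice n k → ℝ) (S : Finset ℕ) : ℝ :=
  if IsH n (min k (n - k)) S then
    (∑ x, f x * basisVec n k S x) / Real.sqrt (∑ x, basisVec n k S x ^ 2)
  else 0

/-- The Hamming weight of `z ∈ {0,1}^t`. -/
def wt {t : ℕ} (z : Fin t → Bool) : ℕ :=
  (Finset.univ.filter fun i => z i = true).card

/-- The concatenation `x ∘ z ∈ {0,1}^n` of `x ∈ {0,1}^{n-t}` with `z ∈ {0,1}^t`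
(with `z` occupying the last `t` coordinates). -/
def catFun (n t : ℕ) (x : Fin (n - t) → Bool) (z : Fin t → Bool) : Fin n → Bool :=
  fun i =>
    if h : (i : ℕ) < n - t then x ⟨i, h⟩
    else if h2 : (i : ℕ) - (n - t) < t then z ⟨(i : ℕ) - (n - t), h2⟩
    else false

/-- The restriction `f_z : C([n-t], k-|z|) → ℝ`, `f_z(x) = f(x ∘ z)`; it is
(the everywhere-zero function on) the empty function when `|z| > k`. -/
noncomputable def restrict (n k t : ℕ) (f : Slice n k → ℝ) (z : Fin t → Bool) :
    Slice (n - t) (k - wt z) → ℝ :=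
  fun x =>
    if h : (Finset.univ.filter fun i => catFun n t x.1 z i = true).card = k then
      f ⟨catFun n t x.1 z, h⟩
    else 0

/-- The Fourier coefficient `f̂_z(S)` of the restriction `f_z`. -/
noncomputable def fourierSliceRestrict (n k t : ℕ) (f : Slice n k → ℝ) (z : Fin t → Bool)
    (S : Finset ℕ) : ℝ :=
  fourierSlice (n - t) (k - wt z) (restrict n k t f z) S

/-- The adjacency matrix `A_{n,k}` of the Johnson graph. -/
noncomputable def johnsonAdj (n k : ℕ) : Matrix (Slice n k) (Slice n k) ℝ :=
  Matrix.of fun x y =>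
    if (Finset.univ.filter fun i => x.1 i ≠ y.1 i).card = 2 then (1 : ℝ) else 0

/-! ### Preliminaries on nested conditionals -/

lemma ite_mul_ite_zero (p q r : Prop) [Decidable p] [Decidable q] [Decidable r]
    [Decidable (r ∧ q ∧ p)] (a : ℝ) :
    (if p then (if q then (1 : ℝ) else 0) * (if r then a else 0) else 0)
      = if r ∧ q ∧ p then a else 0 := by
  by_cases p <;> by_cases q <;> by_cases r <;> simp_all

lemma ite_ite_zero (p q r : Prop) [Decidable (p ∧ q)] [Decidable r]
    [Decidable (r ∧ p ∧ q)] (a : ℝ) :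
    (if p ∧ q then (if r then a else 0) else 0) = if r ∧ p ∧ q then a else 0 := by
  by_cases p <;> by_cases q <;> by_cases r <;> simp_all

/-! ### Counting in intervals of the Boolean lattice -/

/-- The interval `[y, x]` of the Boolean lattice has `choose (|x| - |y|) (c - |y|)` points of
weight `c`. Its cases of atoms and coatoms are the only counting needed below. -/
lemma card_between {n : ℕ} (y x : Fin n → Bool) (c : ℕ) (hc : wt y ≤ c) :
    (Finset.univ.filter fun w : Fin n → Bool =>
        (∀ i, y i = true → w i = true) ∧ (∀ i, w i = true → x i = true) ∧ wt w = c).card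
      = if ∀ i, y i = true → x i = true then (wt x - wt y).choose (c - wt y) else 0 := by
  split_ifs with h
  · have hsub : (Finset.univ.filter fun i => y i = true) ⊆
        (Finset.univ.filter fun i => x i = true) := by
      intro i; simpa using h i
    have hcard : wt x - wt y = ((Finset.univ.filter fun i => x i = true) \
        (Finset.univ.filter fun i => y i = true)).card := by
      rw [Finset.card_sdiff_of_subset hsub]; rfl
    rw [hcard, ← Finset.card_powersetCard]
    refine Finset.card_bij' (fun w _ => (Finset.univ.filter fun i => w i = true) \
        (Finset.univ.filter fun i => y i = true))
      (fun s _ => fun i => decide (i ∈ s ∨ y i = true)) ?_ ?_ ?_ ?_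
    · intro w hw
      simp only [Finset.mem_filter, Finset.mem_univ, true_and] at hw
      obtain ⟨h1, h2, h3⟩ := hw
      rw [Finset.mem_powersetCard]
      refine ⟨Finset.sdiff_subset_sdiff (fun i => by simpa using h2 i) le_rfl, ?_⟩
      rw [Finset.card_sdiff_of_subset (fun i => by simpa using h1 i), ← h3]; rfl
    · intro s hs
      rw [Finset.mem_powersetCard] at hs
      obtain ⟨h1, h2⟩ := hs
      have h1' : ∀ i ∈ s, x i = true ∧ ¬ y i = true := fun i hi => by
        have := h1 hi
        simpa using this
      simp only [Finset.mem_filter, Finset.mem_univ, true_and, decide_eq_true_eq]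
      refine ⟨fun i hi => Or.inr hi, fun i hi => hi.elim (fun h => (h1' i h).1) (h i), ?_⟩
      have : (Finset.univ.filter fun i => decide (i ∈ s ∨ y i = true) = true)
          = s ∪ (Finset.univ.filter fun i => y i = true) := by
        ext i; simp
      rw [wt, this, Finset.card_union_of_disjoint, h2]
      · change c - wt y + wt y = c
        omega
      · rw [Finset.disjoint_left]
        intro i hi
        simpa using (h1' i hi).2
    · intro w hw
      simp only [Finset.mem_filter, Finset.mem_univ, true_and] at hw
      funext i
      have := hw.1 i
      cases hy : y i <;> cases hw : w i <;> simp_all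
    · intro s hs
      rw [Finset.mem_powersetCard] at hs
      ext i
      have := @hs.1 i
      simp at this ⊢
      constructor
      · rintro ⟨h1 | h1, h2⟩
        · exact h1
        · simp [h1] at h2
      · intro hi
        exact ⟨Or.inl hi, (this hi).2⟩
  · rw [Finset.card_eq_zero, Finset.filter_eq_empty_iff]
    rintro w - ⟨h1, h2, -⟩
    exact h fun i hi => h2 i (h1 i hi)

lemma wt_mono {n : ℕ} {y x : Fin n → Bool} (h : ∀ i, y i = true → x i = true) :
    wt y ≤ wt x := by
  apply Finset.card_le_card
  intro i; simpa using h i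

lemma wt_snoc {n : ℕ} (x : Fin n → Bool) (b : Bool) :
    wt (Fin.snoc x b : Fin (n + 1) → Bool) = wt x + b.toNat := by
  unfold wt
  rw [Finset.card_filter, Finset.card_filter, Fin.sum_univ_castSucc]
  cases b <;> simp

lemma snoc_le_snoc {n : ℕ} (y x : Fin n → Bool) (b c : Bool) :
    (∀ i, (Fin.snoc y b : Fin (n + 1) → Bool) i = true →
        (Fin.snoc x c : Fin (n + 1) → Bool) i = true)
      ↔ (∀ i, y i = true → x i = true) ∧ (b = true → c = true) := by
  rw [Fin.forall_fin_succ']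
  simp

lemma sum_snoc {n : ℕ} (g : (Fin (n + 1) → Bool) → ℝ) :
    ∑ x, g x = ∑ x : Fin n → Bool, (g (Fin.snoc x false) + g (Fin.snoc x true)) := by
  rw [← (Fin.snocEquiv (fun _ : Fin (n + 1) => Bool)).sum_comp, Fintype.sum_prod_type,
    Fintype.sum_bool, Finset.sum_add_distrib, add_comm]
  rfl

/-! ### The profile of a basis vector -/

/-- The vector `χ_{n,S}` extended by zero from the slice `C([n],|S|)` to the whole cube. -/
noncomputable def chiF (n : ℕ) (S : Finset ℕ) (y : Fin n → Bool) : ℝ :=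
  if h : wt y = S.card then chi n S ⟨y, h⟩ else 0

/-- The profile `E_{n,S}(x) = ∑_{y ≤ x} χ_{n,S}(y)`, a function on the whole cube. Up to a
positive factor, its restriction to the slice of weight `k` is `P↑_{n,|S|,k} χ_{n,S}`, for every
`k` at once. -/
noncomputable def profile (n : ℕ) (S : Finset ℕ) (x : Fin n → Bool) : ℝ :=
  ∑ y : Fin n → Bool, if ∀ i, y i = true → x i = true then chiF n S y else 0

lemma sum_slice {n k : ℕ} (g : (Fin n → Bool) → ℝ) :
    ∑ x : Slice n k, g x.1 = ∑ x : Fin n → Bool, if wt x = k then g x else 0 := by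
  rw [← Finset.sum_filter]
  exact (Finset.sum_subtype _ (fun x => by rw [Finset.mem_filter]; simp [wt]) g).symm

lemma chiF_eq {n : ℕ} {S : Finset ℕ} (y : Slice n S.card) : chiF n S y.1 = chi n S y := by
  rw [chiF, dif_pos (show wt y.1 = S.card from y.2)]

lemma sum_slice_chi (n : ℕ) (S : Finset ℕ) (x : Fin n → Bool) :
    ∑ y : Slice n S.card, (if ∀ i, y.1 i = true → x i = true then (1 : ℝ) else 0) * chi n S y
      = profile n S x := by
  simp_rw [← chiF_eq]
  rw [sum_slice (fun y => (if ∀ i, y i = true → x i = true then (1 : ℝ) else 0) * chiF n S y)]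
  refine Finset.sum_congr rfl fun y _ => ?_
  by_cases h : wt y = S.card
  · simp [h]
  · simp [h, chiF]

lemma profile_eq_zero {n : ℕ} {S : Finset ℕ} {x : Fin n → Bool} (h : wt x < S.card) :
    profile n S x = 0 := by
  refine Finset.sum_eq_zero fun y _ => ?_
  split_ifs with h1
  · rw [chiF, dif_neg]
    have := wt_mono h1
    omega
  · rfl

/-- The entries of `P↑_{n,i,i+d}` count the maximal chains from `y` to `x`. -/
lemma upPathAux_apply (n i d : ℕ) (x : Slice n (i + d)) (y : Slice n i) :
    upPathAux n i d x y
      = if ∀ j, y.1 j = true → x.1 j = true then (d.factorial : ℝ) else 0 := by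
  induction d with
  | zero =>
    change (1 : Matrix (Slice n i) (Slice n i) ℝ) x y = _
    rw [Matrix.one_apply]
    simp only [Nat.factorial_zero, Nat.cast_one]
    congr 1
    refine propext ⟨fun h => by subst h; simp, fun h => ?_⟩
    have hs : (Finset.univ.filter fun j => y.1 j = true) =
        (Finset.univ.filter fun j => x.1 j = true) := by
      refine Finset.eq_of_subset_of_card_le (fun j => by simpa using h j) ?_
      exact le_of_eq (x.2.trans y.2.symm)
    apply Subtype.ext
    funext j
    have := congrArg (fun s => j ∈ s) hs
    simp at this
    exact this.symm
  | succ d ih =>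
    rw [upPathAux, Matrix.mul_apply]
    simp_rw [ih]
    simp only [upOp, Matrix.of_apply]
    have hy : wt y.1 = i := y.2
    have hx : wt x.1 = i + d + 1 := x.2
    rw [sum_slice (fun w => (if ∀ j, w j = true → x.1 j = true then (1 : ℝ) else 0) *
      (if ∀ j, y.1 j = true → w j = true then (d.factorial : ℝ) else 0))]
    have hc := card_between y.1 x.1 (i + d) (by omega)
    have : ∀ w : Fin n → Bool, (if wt w = i + d then
          (if ∀ j, w j = true → x.1 j = true then (1 : ℝ) else 0) *
          (if ∀ j, y.1 j = true → w j = true then (d.factorial : ℝ) else 0) else 0)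
        = if ((∀ i, y.1 i = true → w i = true) ∧ (∀ i, w i = true → x.1 i = true) ∧
            wt w = i + d) then (d.factorial : ℝ) else 0 := by
      exact fun w => ite_mul_ite_zero _ _ _ _
    simp_rw [this]
    rw [← Finset.sum_filter, Finset.sum_const, hc, hx, hy, nsmul_eq_mul]
    split_ifs
    · rw [show i + d + 1 - i = d + 1 by omega, show i + d - i = d by omega,
        Nat.choose_succ_self_right, Nat.factorial_succ]
      push_cast; ring
    · simp

lemma upPath_apply (n i k : ℕ) (hik : i ≤ k) (x : Slice n k) (y : Slice n i) :
    upPath n i k x y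
      = if ∀ j, y.1 j = true → x.1 j = true then ((k - i).factorial : ℝ) else 0 := by
  -- `e` stands for `k - i`, so that `i + e = k` can be substituted and the `cast` removed.
  have key : ∀ (e : ℕ) (he : i + e = k)
      (h : Matrix (Slice n (i + e)) (Slice n i) ℝ = Matrix (Slice n k) (Slice n i) ℝ),
      (cast h (upPathAux n i e)) x y
        = if ∀ j, y.1 j = true → x.1 j = true then (e.factorial : ℝ) else 0 := by
    intro e he h
    subst he
    exact upPathAux_apply n i e x y
  rw [upPath, dif_pos hik]
  exact key (k - i) (by omega) _

/-- For `k < |S|` both sides vanish, the left because `upPath` is then the zero matrix. -/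
lemma basisVec_eq (n k : ℕ) (S : Finset ℕ) (x : Slice n k) :
    basisVec n k S x = ((k - S.card).factorial : ℝ) * profile n S x.1 := by
  by_cases h : S.card ≤ k
  · rw [basisVec, Matrix.mulVec, dotProduct, ← sum_slice_chi, Finset.mul_sum]
    refine Finset.sum_congr rfl fun y _ => ?_
    rw [upPath_apply n _ k h]
    split_ifs <;> simp
  · rw [profile_eq_zero (by rw [show wt x.1 = k from x.2]; omega)]
    simp [basisVec, upPath, h]

/-- The profile restricted to weight `|S| + 1` is `P↑ χ_{n,S}`, and its own sums over down-sets
are multiples of the profile: each `w ≤ x` of weight `|S|` is counted once for every atom of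
`[w, x]`. -/
lemma sum_profile {n : ℕ} (S : Finset ℕ) (x : Fin n → Bool) :
    ∑ y : Fin n → Bool, (if (∀ i, y i = true → x i = true) ∧ wt y = S.card + 1
        then profile n S y else 0)
      = ((wt x : ℝ) - S.card) * profile n S x := by
  simp only [profile, Finset.mul_sum, Finset.ite_sum_zero]
  rw [Finset.sum_comm]
  refine Finset.sum_congr rfl fun w _ => ?_
  by_cases hw : wt w = S.card
  · have hc := card_between w x (S.card + 1) (by omega)
    have : ∀ y : Fin n → Bool, (if (∀ i, y i = true → x i = true) ∧ wt y = S.card + 1 then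
          (if ∀ i, w i = true → y i = true then chiF n S w else 0) else 0)
        = if ((∀ i, w i = true → y i = true) ∧ (∀ i, y i = true → x i = true) ∧
            wt y = S.card + 1) then chiF n S w else 0 := by
      exact fun y => ite_ite_zero _ _ _ _
    simp_rw [this]
    rw [← Finset.sum_filter, Finset.sum_const, hc, nsmul_eq_mul]
    split_ifs with h
    · have := wt_mono h
      rw [hw] at this ⊢
      rw [show S.card + 1 - S.card = 1 by omega, Nat.choose_one_right, Nat.cast_sub this]
    · simp
  · simp [chiF, hw]

/-! ### Recursion on the last coordinate -/

lemma chiF_snoc_of_notMem {n : ℕ} {S : Finset ℕ} (hS : n + 1 ∉ S) (y : Fin n → Bool) :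
    chiF (n + 1) S (Fin.snoc y false) = chiF n S y ∧
      chiF (n + 1) S (Fin.snoc y true) = 0 := by
  constructor
  · unfold chiF
    by_cases h : wt y = S.card
    · rw [dif_pos (by rw [wt_snoc]; simpa using h), dif_pos h]
      simp [chi, hS, dropLast]
    · rw [dif_neg (by rw [wt_snoc]; simpa using h), dif_neg h]
  · unfold chiF
    split_ifs with h
    · simp [chi, hS]
    · rfl

lemma profile_snoc_of_notMem {n : ℕ} {S : Finset ℕ} (hS : n + 1 ∉ S) (x : Fin n → Bool)
    (b : Bool) : profile (n + 1) S (Fin.snoc x b) = profile n S x := by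
  unfold profile
  rw [sum_snoc]
  refine Finset.sum_congr rfl fun y _ => ?_
  rw [(chiF_snoc_of_notMem hS y).1, (chiF_snoc_of_notMem hS y).2]
  simp only [snoc_le_snoc]
  simp

lemma chiF_snoc_true {n : ℕ} {S : Finset ℕ} (hS : n + 1 ∈ S) (y : Fin n → Bool) :
    chiF (n + 1) S (Fin.snoc y true) = chiF n (S.erase (n + 1)) y := by
  have hc := Finset.card_erase_add_one hS
  unfold chiF
  by_cases h : wt y = (S.erase (n + 1)).card
  · rw [dif_pos (by rw [wt_snoc, h]; simpa using hc), dif_pos h]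
    simp [chi, hS, dropLastT]
  · rw [dif_neg (by rw [wt_snoc]; simp only [Bool.toNat_true]; omega), dif_neg h]

lemma chiF_snoc_false {n : ℕ} {S : Finset ℕ} (hS : n + 1 ∈ S) (y : Fin n → Bool) :
    chiF (n + 1) S (Fin.snoc y false)
      = if wt y = (S.erase (n + 1)).card + 1 then
          -(profile n (S.erase (n + 1)) y) / ((n : ℝ) - 2 * (S.erase (n + 1)).card) else 0 := by
  have hc := Finset.card_erase_add_one hS
  unfold chiF
  by_cases h : wt y = (S.erase (n + 1)).card + 1
  · rw [dif_pos (by rw [wt_snoc, h]; simpa using hc), if_pos h]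
    have hc' : (S.card : ℝ) = (S.erase (n + 1)).card + 1 := by rw [← hc]; push_cast; ring
    simp only [chi, dif_pos hS]
    rw [dif_neg (by simp), sum_slice_chi, hc']
    congr 1
    · simp [dropLast]
    · ring
  · rw [dif_neg (by rw [wt_snoc]; simp only [Bool.toNat_false]; omega), if_neg h]

/-- With `R = S ∖ {n+1}` and `|R| = i`, the recursion for `χ` becomes
`E_{n+1,S}(x ∘ b) = E_{n,R}(x) (b - (|x| - i) / (n - 2i))`. -/
lemma profile_snoc_of_mem {n : ℕ} {S : Finset ℕ} (hS : n + 1 ∈ S) (x : Fin n → Bool)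
    (b : Bool) : profile (n + 1) S (Fin.snoc x b)
      = profile n (S.erase (n + 1)) x * ((if b then 1 else 0)
          - ((wt x : ℝ) - (S.erase (n + 1)).card) / ((n : ℝ) - 2 * (S.erase (n + 1)).card)) := by
  have h1 := sum_profile (S.erase (n + 1)) x
  conv_lhs => unfold profile
  rw [sum_snoc, Finset.sum_add_distrib]
  simp only [snoc_le_snoc, chiF_snoc_true hS, chiF_snoc_false hS]
  have h2 : ∀ y : Fin n → Bool, (if (∀ i, y i = true → x i = true) ∧ (false = true → b = true)
        then (if wt y = (S.erase (n + 1)).card + 1 then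
          -(profile n (S.erase (n + 1)) y) / ((n : ℝ) - 2 * (S.erase (n + 1)).card) else 0) else 0)
      = (if (∀ i, y i = true → x i = true) ∧ wt y = (S.erase (n + 1)).card + 1
        then profile n (S.erase (n + 1)) y else 0)
          * (-1 / ((n : ℝ) - 2 * (S.erase (n + 1)).card)) := by
    intro y
    by_cases h1 : wt y = (S.erase (n + 1)).card + 1
    · simp only [h1, if_true, Bool.false_eq_true, false_imp_iff, and_true]
      split_ifs <;> ring
    · simp [h1]
  rw [Finset.sum_congr rfl fun y _ => h2 y, ← Finset.sum_mul, h1]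
  have h3 : ∑ y : Fin n → Bool, (if (∀ i, y i = true → x i = true) ∧ (True → b = true)
      then chiF n (S.erase (n + 1)) y else 0)
      = (if b then 1 else 0) * profile n (S.erase (n + 1)) x := by
    cases b <;> simp [profile]
  rw [h3]
  ring

/-- The squared norm of the profile on the slice of weight `k`. The weight is an integer, so that
the slices of weight `k - 1` and `k - |z|` need no side condition: they are empty when that number
is negative. -/
noncomputable def normSq (n : ℕ) (k : ℤ) (S : Finset ℕ) : ℝ :=
  ∑ x : Fin n → Bool, if (wt x : ℤ) = k then profile n S x ^ 2 else 0

/-- The inner product of `F` with the profile on the slice of weight `k ∈ ℤ`. -/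
noncomputable def pair (n : ℕ) (k : ℤ) (F : (Fin n → Bool) → ℝ) (S : Finset ℕ) : ℝ :=
  ∑ x : Fin n → Bool, if (wt x : ℤ) = k then F x * profile n S x else 0

lemma sum_snoc_wt {n : ℕ} (k : ℤ) (g : (Fin (n + 1) → Bool) → ℝ) :
    (∑ x : Fin (n + 1) → Bool, if (wt x : ℤ) = k then g x else 0)
      = (∑ x : Fin n → Bool, if (wt x : ℤ) = k then g (Fin.snoc x false) else 0)
        + ∑ x : Fin n → Bool, if (wt x : ℤ) = k - 1 then g (Fin.snoc x true) else 0 := by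
  rw [sum_snoc, Finset.sum_add_distrib]
  congr 1 <;> refine Finset.sum_congr rfl fun x _ => ?_ <;> rw [wt_snoc]
  · simp
  · congr 1
    simp only [Bool.toNat_true, eq_iff_iff]
    push_cast
    omega

lemma sum_wt_mul {n : ℕ} (k : ℤ) (g h : (Fin n → Bool) → ℝ) (c : ℝ)
    (hg : ∀ x, (wt x : ℤ) = k → g x = c * h x) :
    (∑ x : Fin n → Bool, if (wt x : ℤ) = k then g x else 0)
      = c * ∑ x : Fin n → Bool, if (wt x : ℤ) = k then h x else 0 := by
  rw [Finset.mul_sum]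
  refine Finset.sum_congr rfl fun x _ => ?_
  split_ifs with hx
  · exact hg x hx
  · simp

lemma normSq_of_notMem {n : ℕ} {S : Finset ℕ} (hS : n + 1 ∉ S) (k : ℤ) :
    normSq (n + 1) k S = normSq n k S + normSq n (k - 1) S := by
  unfold normSq
  rw [sum_snoc_wt]
  simp only [profile_snoc_of_notMem hS]

lemma pair_of_notMem {n : ℕ} {S : Finset ℕ} (hS : n + 1 ∉ S) (k : ℤ)
    (F : (Fin (n + 1) → Bool) → ℝ) :
    pair (n + 1) k F S = pair n k (fun x => F (Fin.snoc x false)) S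
      + pair n (k - 1) (fun x => F (Fin.snoc x true)) S := by
  unfold pair
  rw [sum_snoc_wt]
  simp only [profile_snoc_of_notMem hS]

lemma normSq_insert {n : ℕ} {S : Finset ℕ} (hS : n + 1 ∉ S) (k : ℤ) {D : ℝ}
    (hD : D = (n : ℝ) - 2 * S.card) (hD0 : D ≠ 0) :
    normSq (n + 1) k (insert (n + 1) S)
      = (((k : ℝ) - S.card) / D) ^ 2 * normSq n k S
        + (((n : ℝ) - S.card - k + 1) / D) ^ 2 * normSq n (k - 1) S := by
  unfold normSq
  rw [sum_snoc_wt]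
  simp only [profile_snoc_of_mem (Finset.mem_insert_self (n + 1) S), Finset.erase_insert hS]
  rw [← hD]
  congr 1 <;> refine sum_wt_mul _ _ _ _ fun x hx => ?_
  · have : (wt x : ℝ) = k := by exact_mod_cast hx
    rw [this]
    simp
    ring
  · have : (wt x : ℝ) = k - 1 := by exact_mod_cast hx
    rw [this]
    simp only [if_true]
    field_simp
    rw [hD]
    ring

lemma pair_insert {n : ℕ} {S : Finset ℕ} (hS : n + 1 ∉ S) (k : ℤ)
    (F : (Fin (n + 1) → Bool) → ℝ) {D : ℝ}
    (hD : D = (n : ℝ) - 2 * S.card) (hD0 : D ≠ 0) :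
    pair (n + 1) k F (insert (n + 1) S)
      = -(((k : ℝ) - S.card) / D) * pair n k (fun x => F (Fin.snoc x false)) S
        + (((n : ℝ) - S.card - k + 1) / D)
          * pair n (k - 1) (fun x => F (Fin.snoc x true)) S := by
  unfold pair
  rw [sum_snoc_wt]
  simp only [profile_snoc_of_mem (Finset.mem_insert_self (n + 1) S), Finset.erase_insert hS]
  rw [← hD]
  congr 1 <;> refine sum_wt_mul _ _ _ _ fun x hx => ?_
  · have : (wt x : ℝ) = k := by exact_mod_cast hx
    rw [this]
    simp
    ring
  · have : (wt x : ℝ) = k - 1 := by exact_mod_cast hx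
    rw [this]
    simp only [if_true]
    field_simp
    rw [hD]
    ring

/-! ### The index sets `H_{n,k}` -/

/-- The part of the condition `S ∈ H_{n,k}` which does not involve `k`. That the `j`-th smallest
element of `S` is at least `2j` is expressed without sorting: every `s ∈ S` is at least twice the
number of elements of `S` up to `s`. -/
def Ballot (n : ℕ) (S : Finset ℕ) : Prop :=
  S ⊆ Finset.Icc 1 n ∧ ∀ s ∈ S, 2 * (S.filter (· ≤ s)).card ≤ s

lemma notMem_of_subset {n : ℕ} {S : Finset ℕ} (h : S ⊆ Finset.Icc 1 n) : n + 1 ∉ S := by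
  intro h'
  have := Finset.mem_Icc.1 (h h')
  omega

lemma Ballot.two_mul_card_le {n : ℕ} {S : Finset ℕ} (h : Ballot n S) : 2 * S.card ≤ n := by
  rcases S.eq_empty_or_nonempty with rfl | hne
  · simp
  · have h1 := h.2 _ (S.max'_mem hne)
    rw [Finset.filter_true_of_mem fun s hs => S.le_max' s hs] at h1
    have := Finset.mem_Icc.1 (h.1 (S.max'_mem hne))
    omega

lemma ballot_succ_iff {n : ℕ} {S : Finset ℕ} (hS : S ⊆ Finset.Icc 1 n) :
    Ballot (n + 1) S ↔ Ballot n S := by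
  have : S ⊆ Finset.Icc 1 (n + 1) :=
    hS.trans (Finset.Icc_subset_Icc_right (Nat.le_succ n))
  simp [Ballot, hS, this]

lemma ballot_insert_iff {n : ℕ} {S : Finset ℕ} (hS : S ⊆ Finset.Icc 1 n) :
    Ballot (n + 1) (insert (n + 1) S) ↔ Ballot n S ∧ 2 * (S.card + 1) ≤ n + 1 := by
  have hmem := notMem_of_subset hS
  have hle : ∀ s ∈ S, s ≤ n := fun s hs => (Finset.mem_Icc.1 (hS hs)).2
  have hsub : insert (n + 1) S ⊆ Finset.Icc 1 (n + 1) := by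
    refine Finset.insert_subset (by simp) ?_
    exact hS.trans (Finset.Icc_subset_Icc_right (Nat.le_succ n))
  have h1 : (insert (n + 1) S).filter (· ≤ n + 1) = insert (n + 1) S := by
    refine Finset.filter_true_of_mem fun s hs => ?_
    exact (Finset.mem_Icc.1 (hsub hs)).2
  have h2 : ∀ s ∈ S, (insert (n + 1) S).filter (· ≤ s) = S.filter (· ≤ s) := by
    intro s hs
    rw [Finset.filter_insert, if_neg]
    have := hle s hs
    omega
  unfold Ballot
  rw [Finset.forall_mem_insert, h1, Finset.card_insert_of_notMem hmem]
  constructor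
  · rintro ⟨-, h3, h4⟩
    exact ⟨⟨hS, fun s hs => by rw [← h2 s hs]; exact h4 s hs⟩, h3⟩
  · rintro ⟨⟨-, h4⟩, h3⟩
    exact ⟨hsub, h3, fun s hs => by rw [h2 s hs]; exact h4 s hs⟩

lemma isH_iff (n k : ℕ) (S : Finset ℕ) : IsH n k S ↔ Ballot n S ∧ S.card ≤ k := by
  have key : (∀ j, j < S.card → 2 * (j + 1) ≤ (S.sort (· ≤ ·)).getD j 0)
      ↔ ∀ s ∈ S, 2 * (S.filter (· ≤ s)).card ≤ s := by
    have hget : ∀ j : Fin S.card, (S.sort (· ≤ ·)).getD j 0 = S.orderEmbOfFin rfl j := by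
      intro j
      rw [Finset.orderEmbOfFin_apply, List.getD_eq_getElem]
      rfl
    have hcard : ∀ j : Fin S.card,
        (S.filter (· ≤ S.orderEmbOfFin rfl j)).card = j + 1 := by
      intro j
      have : S.filter (· ≤ S.orderEmbOfFin rfl j)
          = (Finset.Iic j).map (S.orderEmbOfFin rfl).toEmbedding := by
        ext s
        simp only [Finset.mem_filter, Finset.mem_map, Finset.mem_Iic]
        constructor
        · rintro ⟨hs, hle⟩
          rw [← Finset.mem_coe, ← Finset.range_orderEmbOfFin S rfl] at hs
          obtain ⟨i, rfl⟩ := hs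
          exact ⟨i, by simpa using hle, rfl⟩
        · rintro ⟨i, hi, rfl⟩
          exact ⟨Finset.orderEmbOfFin_mem S rfl i, by simpa using hi⟩
      rw [this, Finset.card_map, Fin.card_Iic]
    constructor
    · intro h s hs
      rw [← Finset.mem_coe, ← Finset.range_orderEmbOfFin S rfl] at hs
      obtain ⟨i, rfl⟩ := hs
      rw [hcard, ← hget]
      exact h i i.2
    · intro h j hj
      rw [hget ⟨j, hj⟩, ← hcard ⟨j, hj⟩]
      exact h _ (Finset.orderEmbOfFin_mem S rfl _)
  unfold IsH Ballot
  rw [key]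
  tauto

/-! ### Norms of the basis vectors -/

/-- Norms of the profile on consecutive slices are proportional, with a ratio that depends on `S`
only through its size. The induction combines the instances at `k` and `k - 1` for `n`. -/
lemma normSq_rec {n : ℕ} : ∀ {S : Finset ℕ}, Ballot n S → ∀ k : ℤ,
    ((k : ℝ) - S.card) * normSq n k S = ((n : ℝ) - S.card - k + 1) * normSq n (k - 1) S := by
  induction n with
  | zero =>
    intro S hS k
    have h0 : S = ∅ := by simpa using hS.1
    subst h0
    simp only [normSq, Fintype.sum_unique, wt]
    by_cases h1 : k = 0
    · subst h1; simp
    · by_cases h2 : k = 1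
      · subst h2; simp
      · have h1' : ¬ 0 = k := fun h => h1 h.symm
        have h2' : ¬ 0 = k - 1 := by omega
        simp [h1', h2']
  | succ n ih =>
    intro S hS k
    by_cases hmem : n + 1 ∈ S
    · obtain ⟨S, hn, rfl⟩ : ∃ R, n + 1 ∉ R ∧ S = insert (n + 1) R :=
        ⟨S.erase (n + 1), Finset.notMem_erase _ _, (Finset.insert_erase hmem).symm⟩
      have hsub : S ⊆ Finset.Icc 1 n := by
        intro s hs
        have := Finset.mem_Icc.1 (hS.1 (Finset.mem_insert_of_mem hs))
        have : s ≠ n + 1 := fun h => hn (h ▸ hs)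
        rw [Finset.mem_Icc]
        omega
      obtain ⟨hb, hc⟩ := (ballot_insert_iff hsub).1 hS
      have hD0 : (n : ℝ) - 2 * S.card ≠ 0 := by
        have : (2 * S.card + 1 : ℝ) ≤ n := by exact_mod_cast (by omega : 2 * S.card + 1 ≤ n)
        intro h; linarith
      rw [normSq_insert hn k rfl hD0, normSq_insert hn (k - 1) rfl hD0,
        Finset.card_insert_of_notMem hn]
      have e1 := ih hb k
      have e2 := ih hb (k - 1)
      push_cast at e1 e2 ⊢
      generalize (n : ℝ) - 2 * S.card = D
      linear_combination (((k : ℝ) - S.card - 1) * (k - S.card) / D ^ 2) * e1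
        + (((n : ℝ) - S.card - k + 1) * ((n : ℝ) - S.card - k + 2) / D ^ 2) * e2
    · have hsub : S ⊆ Finset.Icc 1 n := by
        intro s hs
        have := Finset.mem_Icc.1 (hS.1 hs)
        have : s ≠ n + 1 := fun h => hmem (h ▸ hs)
        rw [Finset.mem_Icc]
        omega
      have hb := (ballot_succ_iff hsub).1 hS
      rw [normSq_of_notMem hmem, normSq_of_notMem hmem]
      have e1 := ih hb k
      have e2 := ih hb (k - 1)
      push_cast at e1 e2 ⊢
      linear_combination e1 + e2

lemma normSq_nonneg (n : ℕ) (k : ℤ) (S : Finset ℕ) : 0 ≤ normSq n k S :=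
  Finset.sum_nonneg fun x _ => by split_ifs <;> positivity

lemma pair_eq_zero {n : ℕ} {k : ℤ} {S : Finset ℕ} (h : normSq n k S = 0)
    (F : (Fin n → Bool) → ℝ) : pair n k F S = 0 := by
  have h0 := (Finset.sum_eq_zero_iff_of_nonneg
    (fun x _ => by split_ifs <;> positivity)).1 h
  refine Finset.sum_eq_zero fun x hx => ?_
  have := h0 x hx
  split_ifs at this ⊢
  · rw [pow_eq_zero_iff two_ne_zero] at this
    rw [this, mul_zero]
  · rfl

/-- Outside the range `|S| ≤ min{k, n-k}` the basis vector vanishes, so the size condition in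
`H_{n,min{k,n-k}}` may be dropped from the definition of the Fourier coefficient: the quotient
is `0 / 0 = 0` there. -/
lemma normSq_eq_zero {n k : ℕ} {S : Finset ℕ} (hS : Ballot n S)
    (h : ¬ S.card ≤ min k (n - k)) : normSq n k S = 0 := by
  rw [le_min_iff, not_and_or] at h
  have hlow : k < S.card → normSq n k S = 0 := by
    intro h
    refine Finset.sum_eq_zero fun x _ => ?_
    split_ifs with hx
    · rw [profile_eq_zero (by omega)]; simp
    · rfl
  -- Downward induction on `k` from the empty slices `k > n`; `d` bounds the distance to them.
  have hbig : ∀ d k : ℕ, n - k < S.card → n + 1 ≤ k + d → normSq n k S = 0 := by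
    intro d
    induction d with
    | zero =>
      intro k _ hk
      refine Finset.sum_eq_zero fun x _ => ?_
      rw [if_neg]
      have : wt x ≤ n := (Finset.card_le_univ _).trans (by simp)
      omega
    | succ d ih =>
      intro k hk hd
      have h1 := ih (k + 1) (by omega) (by omega)
      have h2 := normSq_rec hS (k + 1 : ℤ)
      push_cast at h1
      rw [h1, mul_zero, add_sub_cancel_right] at h2
      rcases mul_eq_zero.1 h2.symm with h3 | h3
      · exfalso
        push_cast at h3
        have : (n : ℝ) = S.card + k := by linarith
        have : n = S.card + k := by exact_mod_cast this
        omega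
      · exact h3
  rcases h with h | h
  · exact hlow (by omega)
  · exact hbig (n + 1) k (by omega) (by omega)

/-! ### One coordinate -/

/-- The squared Fourier coefficient of `F` restricted to the slice of weight `k ∈ ℤ`. It is zero
when the basis vector vanishes, by the convention `0 / 0 = 0`. -/
noncomputable def coeffSq (n : ℕ) (k : ℤ) (F : (Fin n → Bool) → ℝ) (S : Finset ℕ) : ℝ :=
  if Ballot n S then pair n k F S ^ 2 / normSq n k S else 0

lemma fourierSlice_sq {n k : ℕ} (f : Slice n k → ℝ) (F : (Fin n → Bool) → ℝ)
    (hF : ∀ x : Slice n k, F x.1 = f x) (S : Finset ℕ) :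
    fourierSlice n k f S ^ 2 = coeffSq n k F S := by
  unfold fourierSlice coeffSq
  rw [isH_iff]
  by_cases hb : Ballot n S
  · by_cases hc : S.card ≤ min k (n - k)
    · rw [if_pos ⟨hb, hc⟩, if_pos hb]
      have h1 : ∑ x, f x * basisVec n k S x = ((k - S.card).factorial : ℝ) * pair n k F S := by
        simp only [basisVec_eq, ← hF]
        rw [sum_slice (fun x => F x * (((k - S.card).factorial : ℝ) * profile n S x)), pair,
          Finset.mul_sum]
        refine Finset.sum_congr rfl fun x _ => ?_
        simp only [Nat.cast_inj]
        split_ifs <;> ring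
      have h2 : ∑ x, basisVec n k S x ^ 2
          = ((k - S.card).factorial : ℝ) ^ 2 * normSq n k S := by
        simp only [basisVec_eq]
        rw [sum_slice (fun x => (((k - S.card).factorial : ℝ) * profile n S x) ^ 2), normSq,
          Finset.mul_sum]
        refine Finset.sum_congr rfl fun x _ => ?_
        simp only [Nat.cast_inj]
        split_ifs <;> ring
      rw [div_pow, Real.sq_sqrt (Finset.sum_nonneg fun x _ => sq_nonneg _), h1, h2, mul_pow]
      exact mul_div_mul_left _ _ (by positivity)
    · rw [if_neg (fun h => hc h.2), if_pos hb, normSq_eq_zero hb hc]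
      simp
  · rw [if_neg (fun h => hb h.1), if_neg hb]
    simp

/-- Let `a`, `b` be orthogonal vectors with squared norms `A`, `B`. If `u A = v B`, then `a + b` and
`-u a + v b` are orthogonal too and span the same plane, so both pairs give the same value for the
squared norm of the projection of a vector whose inner products with `a`, `b` are `p`, `q`. The
second vector is scaled by `1 / (u + v - 1)`, as in `pair_insert`. -/
lemma plane_identity {A B p q u v : ℝ} (hA : 0 ≤ A) (hB : 0 ≤ B) (hp : A = 0 → p = 0)
    (hq : B = 0 → q = 0) (huv : u * A = v * B) (hs : 1 < u + v) :
    p ^ 2 / A + q ^ 2 / B = (p + q) ^ 2 / (A + B)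
      + (-(u / (u + v - 1)) * p + v / (u + v - 1) * q) ^ 2
        / ((u / (u + v - 1)) ^ 2 * A + (v / (u + v - 1)) ^ 2 * B) := by
  have hD : u + v - 1 ≠ 0 := by intro h; linarith
  rcases hA.eq_or_lt with h | hA
  · rcases hB.eq_or_lt with h' | hB
    · simp [← h, ← h']
    · have hv : v = 0 := by
        rw [← h, mul_zero] at huv
        exact (mul_eq_zero.1 huv.symm).resolve_right hB.ne'
      simp [← h, hp h.symm, hv]
  · rcases hB.eq_or_lt with h' | hB
    · have hu : u = 0 := by
        rw [← h', mul_zero] at huv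
        exact (mul_eq_zero.1 huv).resolve_right hA.ne'
      simp [← h', hq h'.symm, hu]
    · have hv : 0 < v := by
        by_contra hv
        have : u * A ≤ 0 := huv ▸ mul_nonpos_of_nonpos_of_nonneg (not_lt.1 hv) hB.le
        have : u ≤ 0 := by
          by_contra hu
          exact absurd (mul_pos (not_le.1 hu) hA) (not_lt.2 this)
        linarith
      have hu : 0 < u := by
        have := huv ▸ mul_pos hv hB
        exact pos_of_mul_pos_left this hA.le
      obtain rfl : B = u * A / v := by field_simp; linarith
      have h1 : A + u * A / v ≠ 0 := by positivity
      have : (u / (u + v - 1)) ^ 2 * A + (v / (u + v - 1)) ^ 2 * (u * A / v)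
        = u * (u + v) * A / (u + v - 1) ^ 2 := by field_simp
      rw [this, show A + u * A / v = (u + v) * A / v by field_simp; ring]
      have : u + v ≠ 0 := by positivity
      field_simp
      ring

/-- The case `t = 1` of the theorem. -/
lemma coeffSq_step {n : ℕ} {S : Finset ℕ} (hS : S ⊆ Finset.Icc 1 n) (k : ℤ)
    (F : (Fin (n + 1) → Bool) → ℝ) :
    coeffSq n k (fun x => F (Fin.snoc x false)) S
        + coeffSq n (k - 1) (fun x => F (Fin.snoc x true)) S
      = coeffSq (n + 1) k F S + coeffSq (n + 1) k F (insert (n + 1) S) := by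
  have hmem := notMem_of_subset hS
  unfold coeffSq
  rw [ballot_succ_iff hS, ballot_insert_iff hS]
  by_cases hb : Ballot n S
  swap
  · simp [hb]
  have hA := normSq_nonneg n k S
  have hB := normSq_nonneg n (k - 1) S
  have hp := fun h => pair_eq_zero (n := n) (k := k) (S := S) h (fun x => F (Fin.snoc x false))
  have hq := fun h => pair_eq_zero (n := n) (k := k - 1) (S := S) h
    (fun x => F (Fin.snoc x true))
  have huv := normSq_rec hb k
  simp only [hb, true_and, if_true]
  rw [pair_of_notMem hmem, normSq_of_notMem hmem]
  split_ifs with hc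
  · have hc' : (2 * S.card + 1 : ℝ) ≤ n := by exact_mod_cast (by omega : 2 * S.card + 1 ≤ n)
    have hD : ((k : ℝ) - S.card) + ((n : ℝ) - S.card - k + 1) - 1 = (n : ℝ) - 2 * S.card := by
      ring
    rw [pair_insert hmem k F hD (by rw [hD]; intro h; linarith),
      normSq_insert hmem k hD (by rw [hD]; intro h; linarith)]
    exact plane_identity hA hB hp hq huv (by linarith)
  · -- Here `n = 2|S|`, and `normSq_rec` has integer coefficients `u`, `v` with `u + v = 1`. They
    -- cannot both be positive, so one of the two slices carries no basis vector.
    have h2 := hb.two_mul_card_le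
    have hn : n = 2 * S.card := by omega
    have hzero : normSq n k S = 0 ∨ normSq n (k - 1) S = 0 := by
      by_contra! h
      have hA' := lt_of_le_of_ne hA h.1.symm
      have hB' := lt_of_le_of_ne hB h.2.symm
      have hn' : (n : ℝ) = 2 * S.card := by exact_mod_cast hn
      rcases le_or_gt k S.card with hk | hk
      · have hk' : (k : ℝ) ≤ S.card := by exact_mod_cast hk
        have : 0 < ((n : ℝ) - S.card - k + 1) * normSq n (k - 1) S :=
          mul_pos (by linarith) hB'
        have : ((k : ℝ) - S.card) * normSq n k S ≤ 0 :=
          mul_nonpos_of_nonpos_of_nonneg (by linarith) hA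
        linarith
      · have hk' : (S.card : ℝ) + 1 ≤ k := by exact_mod_cast hk
        have : 0 < ((k : ℝ) - S.card) * normSq n k S := mul_pos (by linarith) hA'
        have : ((n : ℝ) - S.card - k + 1) * normSq n (k - 1) S ≤ 0 :=
          mul_nonpos_of_nonpos_of_nonneg (by linarith) hB
        linarith
    rcases hzero with h | h
    · simp [h, hp h]
    · simp [h, hq h]

lemma coeffSq_neg {n : ℕ} {k : ℤ} (hk : k < 0) (F : (Fin n → Bool) → ℝ) (S : Finset ℕ) :
    coeffSq n k F S = 0 := by
  have : normSq n k S = 0 := by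
    refine Finset.sum_eq_zero fun x _ => ?_
    rw [if_neg (by omega)]
  simp [coeffSq, this]

/-! ### Several coordinates -/

/-- The concatenation `x ∘ z` with independent dimensions, meaningful for `n = m + t`; `catFun n t`
is its case `m = n - t`. -/
def glue (m t n : ℕ) (x : Fin m → Bool) (z : Fin t → Bool) : Fin n → Bool :=
  fun i =>
    if h : (i : ℕ) < m then x ⟨i, h⟩
    else if h2 : (i : ℕ) - m < t then z ⟨(i : ℕ) - m, h2⟩
    else false

lemma glue_snoc {m t : ℕ} (x : Fin m → Bool) (z : Fin t → Bool) (b : Bool) :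
    glue m (t + 1) (m + t + 1) x (Fin.snoc z b) = Fin.snoc (glue m t (m + t) x z) b := by
  funext i
  refine Fin.lastCases ?_ (fun i => ?_) i
  · simp [glue, Fin.snoc]
  · simp only [Fin.snoc_castSucc]
    have := i.2
    simp only [glue, Fin.val_castSucc]
    split_ifs with h1 h2 h3 h3
    · rfl
    · simp [Fin.snoc, h3]
    all_goals omega

lemma wt_glue {m t : ℕ} (x : Fin m → Bool) (z : Fin t → Bool) :
    wt (glue m t (m + t) x z) = wt x + wt z := by
  unfold wt
  rw [Finset.card_filter, Finset.card_filter, Finset.card_filter, Fin.sum_univ_add]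
  simp [glue]

/-- The theorem for functions on the whole cube, by induction on `t`: the last coordinate is fixed
first, the induction hypothesis treats the remaining ones, and `coeffSq_step` merges the two
values of the last coordinate. -/
lemma sum_coeffSq (m t : ℕ) : ∀ (k : ℤ) (F : (Fin (m + t) → Bool) → ℝ) (S : Finset ℕ),
    S ⊆ Finset.Icc 1 m →
    ∑ z : Fin t → Bool, coeffSq m (k - wt z) (fun x => F (glue m t (m + t) x z)) S
      = ∑ T ∈ (Finset.Icc (m + 1) (m + t)).powerset, coeffSq (m + t) k F (S ∪ T) := by
  induction t with
  | zero =>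
    intro k F S hS
    have : ∀ z x, glue m 0 m x z = x := by
      intro z x; funext i; simp [glue]
    simp [this, wt]
  | succ t ih =>
    intro k F S hS
    have hlast : m + t + 1 ∉ Finset.Icc (m + 1) (m + t) := by simp
    change ∑ z : Fin (t + 1) → Bool,
        coeffSq m (k - wt z) (fun x => F (glue m (t + 1) (m + t + 1) x z)) S
      = ∑ T ∈ (Finset.Icc (m + 1) (m + t + 1)).powerset, coeffSq (m + t + 1) k F (S ∪ T)
    have hIcc : Finset.Icc (m + 1) (m + t + 1)
        = insert (m + t + 1) (Finset.Icc (m + 1) (m + t)) := by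
      ext a; simp only [Finset.mem_Icc, Finset.mem_insert]; omega
    rw [hIcc, Finset.sum_powerset_insert hlast, sum_snoc]
    simp only [glue_snoc, wt_snoc]
    have h0 := ih k (fun x => F (Fin.snoc x false)) S hS
    have h1 := ih (k - 1) (fun x => F (Fin.snoc x true)) S hS
    have hk : ∀ z : Fin t → Bool, k - ((wt z + true.toNat : ℕ) : ℤ) = k - 1 - wt z := by
      intro z; simp; ring
    simp only [hk]
    simp only [Bool.toNat_false, add_zero]
    rw [Finset.sum_add_distrib, h0, h1, ← Finset.sum_add_distrib, ← Finset.sum_add_distrib]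
    refine Finset.sum_congr rfl fun T hT => ?_
    rw [Finset.union_insert]
    refine coeffSq_step (Finset.union_subset ?_ ?_) k F
    · exact hS.trans (Finset.Icc_subset_Icc_right (Nat.le_add_right m t))
    · exact (Finset.mem_powerset.1 hT).trans (Finset.Icc_subset_Icc_left (by omega))

lemma fourierSliceRestrict_sq {n k t : ℕ} (ht : t ≤ n) (f : Slice n k → ℝ)
    (F : (Fin n → Bool) → ℝ) (hF : ∀ x : Slice n k, F x.1 = f x) (z : Fin t → Bool)
    (S : Finset ℕ) :
    fourierSliceRestrict n k t f z S ^ 2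
      = coeffSq (n - t) ((k : ℤ) - wt z) (fun x => F (glue (n - t) t n x z)) S := by
  have hwt : ∀ (m n : ℕ), n = m + t → ∀ x : Fin m → Bool,
      wt (glue m t n x z) = wt x + wt z := by
    rintro m _ rfl x
    exact wt_glue x z
  by_cases hz : wt z ≤ k
  · rw [fourierSliceRestrict, fourierSlice_sq _ (fun x => F (glue (n - t) t n x z)),
      Nat.cast_sub hz]
    intro x
    have hx : wt (catFun n t x.1 z) = k := by
      refine (hwt (n - t) n (by omega) x.1).trans ?_
      rw [show wt x.1 = k - wt z from x.2]
      omega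
    have hx2 : (Finset.univ.filter fun i => catFun n t x.1 z i = true).card = k := hx
    rw [restrict, dif_pos hx2]
    exact hF ⟨_, hx2⟩
  · -- For `|z| > k` the truncated weight `k - |z|` is `0`, but the restriction is then zero.
    rw [coeffSq_neg (by omega)]
    have h0 : restrict n k t f z = fun _ => 0 := by
      funext x
      rw [restrict, dif_neg]
      intro h
      have := (hwt (n - t) n (by omega) x.1).symm.trans h
      omega
    rw [fourierSliceRestrict, h0]
    simp [fourierSlice]

/-- For `S ⊆ [n-t]`:
`Σ_{z ∈ {0,1}^t} f̂_z(S)² = Σ_{T ⊆ [n]∖[n-t]} f̂(S ∪ T)²`. -/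
theorem stmt16 (n k t : ℕ) (ht : t ≤ n) (hk : k ≤ n) (f : Slice n k → ℝ)
    (S : Finset ℕ) (hS : S ⊆ Finset.Icc 1 (n - t)) :
    ∑ z : Fin t → Bool, fourierSliceRestrict n k t f z S ^ 2
      = ∑ T ∈ (Finset.Icc (n - t + 1) n).powerset, fourierSlice n k f (S ∪ T) ^ 2 := by
  obtain ⟨F, hF⟩ : ∃ F : (Fin n → Bool) → ℝ, ∀ x : Slice n k, F x.1 = f x :=
    ⟨fun x => if h : wt x = k then f ⟨x, h⟩ else 0, fun x => dif_pos x.2⟩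
  -- Writing `m` for `n - t` lets `n = m + t` be substituted.
  have key : ∀ m, n = m + t → S ⊆ Finset.Icc 1 m →
      ∑ z : Fin t → Bool, coeffSq m ((k : ℤ) - wt z) (fun x => F (glue m t n x z)) S
        = ∑ T ∈ (Finset.Icc (m + 1) n).powerset, coeffSq n k F (S ∪ T) := by
    intro m hm hSm
    subst hm
    exact sum_coeffSq m t k F S hSm
  simp only [fourierSliceRestrict_sq ht f F hF, fourierSlice_sq f F hF]
  exact key (n - t) (by omega) hS
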